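/- arXiv:1809.03984 — 5 statements merged into one kernel-verified Lean document; each statement's English description precedes it below -/
import Mathlib

section
/- Let S be an inf-semilattice ordered Cu-semigroup, let x, y_1, …, y_n ∈ S with n ≥ 1, and let M ≥ 1 be such that x ≤ M·y_k for each k = 1, …, n. Then x ≤ N·(⋀_{k=1}^n y_k), where N = n(M−1)+1. In particular, if x ∝ y_k for each k, then x ∝ ⋀_{k=1}^n y_k. -/
/-- The way-below (compact containment) relation on a partially ordered set:
`WayBelow x y` holds if whenever `(y n)` is an increasing sequence admitting a
supremum `s` with `y ≤ s`, then `x ≤ y n` for some `n`. -/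
def WayBelow {S : Type*} [PartialOrder S] (x y : S) : Prop :=
  ∀ f : ℕ → S, Monotone f → ∀ s : S, IsLUB (Set.range f) s → y ≤ s → ∃ n, x ≤ f n

/-- An abstract Cuntz semigroup (Cu-semigroup): a positively ordered commutative
monoid satisfying the axioms (O1)-(O4). -/
class CuSemigroup (S : Type*) [AddCommMonoid S] [PartialOrder S] : Prop where
  /-- The order is positive. -/
  zero_le : ∀ x : S, 0 ≤ x
  /-- Addition is order-preserving. -/
  add_le_add : ∀ {x y z w : S}, x ≤ y → z ≤ w → x + z ≤ y + w
  /-- (O1): every increasing sequence has a supremum. -/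
  O1 : ∀ f : ℕ → S, Monotone f → ∃ s : S, IsLUB (Set.range f) s
  /-- (O2): every element is the supremum of a `≪`-increasing sequence. -/
  O2 : ∀ x : S, ∃ f : ℕ → S, (∀ n, WayBelow (f n) (f (n + 1))) ∧ IsLUB (Set.range f) x
  /-- (O3): the way-below relation is additive. -/
  O3 : ∀ {x' x y' y : S}, WayBelow x' x → WayBelow y' y → WayBelow (x' + y') (x + y)
  /-- (O4): addition is compatible with suprema of increasing sequences. -/
  O4 : ∀ (f g : ℕ → S), Monotone f → Monotone g → ∀ a b : S,
        IsLUB (Set.range f) a → IsLUB (Set.range g) b →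
        IsLUB (Set.range fun n => f n + g n) (a + b)

/-- Axiom (O5) (almost algebraic order). -/
def O5 (S : Type*) [AddCommMonoid S] [PartialOrder S] : Prop :=
  ∀ x' x z : S, WayBelow x' x → x ≤ z → ∃ w : S, x' + w ≤ z ∧ z ≤ x + w

/-- Axiom (O6+). -/
def O6plus (S : Type*) [AddCommMonoid S] [PartialOrder S] : Prop :=
  ∀ a b c x' x y' y : S, a ≤ b + c →
    WayBelow x' x → x ≤ a → x ≤ b → WayBelow y' y → y ≤ a → y ≤ c →
    ∃ e f : S, a ≤ e + f ∧ WayBelow x' e ∧ e ≤ a ∧ e ≤ b ∧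
      WayBelow y' f ∧ f ≤ a ∧ f ≤ c

/-- Weak cancellation: `x + z ≪ y + z` implies `x ≪ y`. -/
def WeakCancel (S : Type*) [AddCommMonoid S] [PartialOrder S] : Prop :=
  ∀ x y z : S, WayBelow (x + z) (y + z) → WayBelow x y

/-- A Cu-semigroup is countably based if there is a countable subset `B` such that every
element is the supremum of a `≪`-increasing sequence with elements in `B`. -/
def CountablyBased (S : Type*) [AddCommMonoid S] [PartialOrder S] : Prop :=
  ∃ B : Set S, B.Countable ∧ ∀ x : S, ∃ f : ℕ → S, (∀ n, f n ∈ B) ∧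
    (∀ n, WayBelow (f n) (f (n + 1))) ∧ IsLUB (Set.range f) x

/-- Addition distributes over the infimum operation. -/
def InfDistrib (S : Type*) [AddCommMonoid S] [SemilatticeInf S] : Prop :=
  ∀ x y z : S, (x + z) ⊓ (y + z) = (x ⊓ y) + z

/-- A functional on an ordered monoid: a `[0,∞]`-valued map preserving `0`, addition,
order, and suprema of increasing sequences. -/
def IsFunctional {S : Type*} [AddCommMonoid S] [PartialOrder S] (l : S → ENNReal) : Prop :=
  l 0 = 0 ∧ (∀ x y : S, l (x + y) = l x + l y) ∧ (∀ x y : S, x ≤ y → l x ≤ l y) ∧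
    ∀ (f : ℕ → S) (s : S), Monotone f → IsLUB (Set.range f) s → l s = ⨆ n, l (f n)

/-- An element is soft if each of its way-below approximants `x'` satisfies
`(k+1)·x' ≤ k·x` for some `k`. -/
def Soft {S : Type*} [AddCommMonoid S] [PartialOrder S] (x : S) : Prop :=
  ∀ x' : S, WayBelow x' x → ∃ k : ℕ, (k + 1) • x' ≤ k • x

/-- An element `x` is full if `∞·x = sup_n n·x` exists and dominates every element. -/
def IsFull {S : Type*} [AddCommMonoid S] [PartialOrder S] (x : S) : Prop :=
  ∃ s : S, IsLUB (Set.range fun n : ℕ => n • x) s ∧ ∀ t : S, t ≤ s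

/-!
Distributivity expands `r • (a ⊓ b)` as the infimum of all `i • a + j • b` with `i + j = r`. If
`r = m + k + 1`, then each such pair has `i ≥ m + 1` or `j ≥ k + 1`, so for `a, b ≥ 0` a common
lower bound of `(m + 1) • a` and `(k + 1) • b` lies below `(m + k + 1) • (a ⊓ b)`. Thus
multiplicities `m + 1` and `k + 1` combine to `m + k + 1`, and iterating over finitely many
elements gives `∑ m_k + 1`, which is `n (M - 1) + 1` when every `m_k` is `M - 1`.
-/

namespace InfDistrib

variable {S : Type*} [AddCommMonoid S] [SemilatticeInf S]

theorem isOrderedAddMonoid (hdist : InfDistrib S) : IsOrderedAddMonoid S where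
  add_le_add_left a b hab c := by
    rw [← inf_eq_left, hdist, inf_eq_left.mpr hab]

theorem le_nsmul_inf_add_of_forall_le (hdist : InfDistrib S) {r : ℕ} {a b x z : S}
    (h : ∀ i j, i + j = r → x ≤ i • a + j • b + z) : x ≤ r • (a ⊓ b) + z := by
  induction r generalizing z with
  | zero => simpa only [zero_nsmul, zero_add] using h 0 0 rfl
  | succ r ih =>
    rw [succ_nsmul, add_assoc]
    refine ih fun i j hij => ?_
    rw [add_left_comm, ← hdist]
    refine le_inf ?_ ?_
    · calc
        x ≤ (i + 1) • a + j • b + z := h (i + 1) j (by omega)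
        _ = a + (i • a + j • b + z) := by rw [succ_nsmul]; abel
    · calc
        x ≤ i • a + (j + 1) • b + z := h i (j + 1) (by omega)
        _ = b + (i • a + j • b + z) := by rw [succ_nsmul]; abel

theorem le_nsmul_inf_of_le_nsmul (hdist : InfDistrib S) {m k : ℕ} {a b x : S}
    (ha : 0 ≤ a) (hb : 0 ≤ b) (hxa : x ≤ (m + 1) • a) (hxb : x ≤ (k + 1) • b) :
    x ≤ (m + k + 1) • (a ⊓ b) := by
  have := hdist.isOrderedAddMonoid
  suffices hsums : ∀ i j, i + j = m + k + 1 → x ≤ i • a + j • b + 0 by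
    simpa only [add_zero] using hdist.le_nsmul_inf_add_of_forall_le hsums
  intro i j hij
  rw [add_zero]
  obtain hi | hj : m + 1 ≤ i ∨ k + 1 ≤ j := by omega
  · calc
      x ≤ (m + 1) • a := hxa
      _ ≤ i • a := nsmul_le_nsmul_left ha hi
      _ ≤ i • a + j • b := le_add_of_nonneg_right (nsmul_nonneg hb j)
  · calc
      x ≤ (k + 1) • b := hxb
      _ ≤ j • b := nsmul_le_nsmul_left hb hj
      _ ≤ i • a + j • b := le_add_of_nonneg_left (nsmul_nonneg ha i)

end InfDistrib

theorem le_nsmul_inf'_of_forall_le_nsmul_general {S ι : Type*} [AddCommMonoid S]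
    [SemilatticeInf S] (hdist : InfDistrib S) {s : Finset ι} (hs : s.Nonempty) {m : ι → ℕ}
    {x : S} {y : ι → S} (hy : ∀ k ∈ s, 0 ≤ y k) (h : ∀ k ∈ s, x ≤ (m k + 1) • y k) :
    x ≤ (∑ k ∈ s, m k + 1) • s.inf' hs y := by
  induction hs using Finset.Nonempty.cons_induction with
  | singleton k => simpa using h
  | cons k s hk hs ih =>
    rw [Finset.forall_mem_cons] at hy h
    rw [Finset.sum_cons, Finset.inf'_cons hs]
    exact hdist.le_nsmul_inf_of_le_nsmul hy.1 (Finset.le_inf' hs y hy.2) h.1 (ih hy.2 h.2)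

/-- In an inf-semilattice ordered Cu-semigroup, if `x ≤ M·y k` for each `k`, then
`x ≤ N·(⋀_k y k)` with `N = n(M−1)+1`; in particular `x ∝ y k` for all `k` implies
`x ∝ ⋀_k y k`. -/
theorem le_nsmul_inf'_of_forall_le_nsmul {S : Type*} [AddCommMonoid S] [SemilatticeInf S]
    [CuSemigroup S] (hdist : InfDistrib S)
    (n M : ℕ) (hn : 1 ≤ n) (hM : 1 ≤ M) (x : S) (y : Fin n → S)
    (h : ∀ k, x ≤ M • y k) :
    x ≤ (n * (M - 1) + 1) •
      Finset.univ.inf' (Finset.univ_nonempty_iff.mpr ⟨⟨0, hn⟩⟩) y := by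
  simpa using le_nsmul_inf'_of_forall_le_nsmul_general hdist
    (Finset.univ_nonempty_iff.mpr ⟨⟨0, hn⟩⟩) (m := fun _ => M - 1)
    (fun k _ => CuSemigroup.zero_le (y k)) fun k _ => by
      simpa only [Nat.sub_add_cancel hM] using h k
end

section
/- Let S be an inf-semilattice ordered Cu-semigroup satisfying (O5) and weak cancellation. Let k ≥ 1, n ≥ 1, and let x', x, y_1, …, y_n ∈ S be such that x' ≪ x, x' ≪ y_1 + ⋯ + y_n, and k·y_j ≤ x for each j. Then there exist z_1, …, z_k ∈ S such that z_1 + ⋯ + z_k ≤ x and x' ≤ M·z_j for each j, where M = max{ n^r·(k−r) + n^{r−1} : r = 1, …, k }. -/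
/-!
A multiple `N • inf_j u_j` is, by distributivity, the infimum of all sums of `N` of the `u_j`. Take
`u_j` to be an almost complement of `k • y_j` in `x`, and `N = n * k + 1`. By the pigeonhole
principle a sum of `N` of the elements `k • y_j` repeats some `j` at least `k + 1` times, and
`(k + 1) • k • y_j ≤ k • x`; so the sum is at most `(N - 1) • x`, and the corresponding sum of the
`u_j` almost dominates `x`. Hence `z = inf_j u_j` satisfies `x' ≤ N • z`, while every `k • y_j`
still almost fits into an almost complement `w` of `z`. The induction continues inside `w`, with
`x'` replaced by some `w' ≪ w ⊓ ∑ y_j`. As `∑ y_j ≤ n • w`, one can achieve `x' ≤ n • w'`, which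
costs a factor `n` at each step.
-/

local infix:50 " ≪ " => WayBelow

section WayBelow

variable {S : Type*} [PartialOrder S] {x y z : S}

theorem WayBelow.le (h : x ≪ y) : x ≤ y := by
  obtain ⟨_, hxy⟩ := h (fun _ => y) monotone_const y (by simp) le_rfl
  exact hxy

theorem WayBelow.trans_le (hxy : x ≪ y) (hyz : y ≤ z) : x ≪ z :=
  fun f hf s hs hzs => hxy f hf s hs (hyz.trans hzs)

theorem wayBelow_of_le_of_wayBelow (hxy : x ≤ y) (hyz : y ≪ z) : x ≪ z :=
  fun f hf s hs hzs => (hyz f hf s hs hzs).imp fun _ => hxy.trans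

theorem zero_wayBelow [Zero S] [IsBotZeroClass S] (x : S) : 0 ≪ x :=
  fun _ _ _ _ _ => ⟨0, zero_le⟩

end WayBelow

theorem monotone_sum_of_monotone {ι α S : Type*} [Preorder α] [AddCommMonoid S] [PartialOrder S]
    [IsOrderedAddMonoid S] (s : Finset ι) {f : ι → α → S} (hf : ∀ i, Monotone (f i)) :
    Monotone fun m => ∑ i ∈ s, f i m :=
  fun _ _ hab => Finset.sum_le_sum fun i _ => hf i hab

section CuSemigroup

variable {S : Type*} [AddCommMonoid S] [PartialOrder S] [CuSemigroup S] {ι : Type*} {x y : S}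

instance CuSemigroup.isOrderedAddMonoid : IsOrderedAddMonoid S where
  add_le_add_left _ _ h _ := CuSemigroup.add_le_add h le_rfl

instance CuSemigroup.isBotZeroClass : IsBotZeroClass S where
  isBot_zero := CuSemigroup.zero_le

theorem WayBelow.nsmul (h : x ≪ y) (N : ℕ) : N • x ≪ N • y := by
  induction N with
  | zero => simpa only [zero_nsmul] using zero_wayBelow (0 : S)
  | succ N ih => simpa only [succ_nsmul] using CuSemigroup.O3 ih h

theorem wayBelow_multiset_sum_map {u v : ι → S} (s : Multiset ι) (h : ∀ i, u i ≪ v i) :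
    (s.map u).sum ≪ (s.map v).sum := by
  induction s using Multiset.induction_on with
  | empty => simpa using zero_wayBelow (0 : S)
  | cons i s ih => simpa using CuSemigroup.O3 (h i) ih

theorem exists_monotone_wayBelow_isLUB (x : S) :
    ∃ f : ℕ → S, Monotone f ∧ (∀ m, f m ≪ x) ∧ IsLUB (Set.range f) x := by
  obtain ⟨f, hf, hlub⟩ := CuSemigroup.O2 x
  exact ⟨f, monotone_nat_of_le_succ fun m => (hf m).le,
    fun m => (hf m).trans_le (hlub.1 ⟨m + 1, rfl⟩), hlub⟩

theorem WayBelow.exists_between (h : x ≪ y) : ∃ z, x ≪ z ∧ z ≪ y := by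
  obtain ⟨f, hf, hlub⟩ := CuSemigroup.O2 y
  obtain ⟨m, hm⟩ := h f (monotone_nat_of_le_succ fun m => (hf m).le) y hlub le_rfl
  exact ⟨f (m + 1), wayBelow_of_le_of_wayBelow hm (hf m),
    (hf (m + 1)).trans_le (hlub.1 ⟨m + 2, rfl⟩)⟩

theorem WayBelow.exists_wayBelow_of_isLUB (h : x ≪ y) {f : ℕ → S} (hf : Monotone f)
    (hlub : IsLUB (Set.range f) y) : ∃ m, x ≪ f m := by
  obtain ⟨z, hxz, hzy⟩ := h.exists_between
  obtain ⟨m, hm⟩ := hzy f hf y hlub le_rfl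
  exact ⟨m, hxz.trans_le hm⟩

theorem isLUB_range_sum (s : Finset ι) {f : ι → ℕ → S} {y : ι → S} (hf : ∀ i, Monotone (f i))
    (hlub : ∀ i, IsLUB (Set.range (f i)) (y i)) :
    IsLUB (Set.range fun m => ∑ i ∈ s, f i m) (∑ i ∈ s, y i) := by
  induction s using Finset.cons_induction with
  | empty => simp
  | cons i s hi ih =>
    simp only [Finset.sum_cons]
    exact CuSemigroup.O4 _ _ (hf i) (monotone_sum_of_monotone s hf) _ _ (hlub i) ih

theorem WayBelow.exists_wayBelow_sum {s : Finset ι} {y : ι → S} (h : x ≪ ∑ i ∈ s, y i) :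
    ∃ y' : ι → S, (∀ i, y' i ≪ y i) ∧ x ≪ ∑ i ∈ s, y' i := by
  choose f hmono hway hlub using fun i => exists_monotone_wayBelow_isLUB (y i)
  obtain ⟨m, hm⟩ :=
    h.exists_wayBelow_of_isLUB (monotone_sum_of_monotone s hmono) (isLUB_range_sum s hmono hlub)
  exact ⟨fun i => f i m, fun i => hway i m, hm⟩

theorem WayBelow.exists_wayBelow_nsmul {N : ℕ} (h : x ≪ N • y) :
    ∃ y', y' ≪ y ∧ x ≪ N • y' := by
  obtain ⟨f, hmono, hway, hlub⟩ := exists_monotone_wayBelow_isLUB y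
  have hlub_nsmul : IsLUB (Set.range fun m => N • f m) (N • y) := by
    simpa using isLUB_range_sum (Finset.range N) (fun _ => hmono) (fun _ => hlub)
  obtain ⟨m, hm⟩ := h.exists_wayBelow_of_isLUB (hmono.const_nsmul N) hlub_nsmul
  exact ⟨f m, hway m, hm⟩

end CuSemigroup

section InfDistrib

variable {S : Type*} [AddCommMonoid S] [SemilatticeInf S] {ι : Type*}

theorem InfDistrib.inf'_add (hdist : InfDistrib S) {t : Finset ι} (ht : t.Nonempty) (u : ι → S)
    (a : S) : t.inf' ht u + a = t.inf' ht fun i => u i + a :=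
  Finset.apply_inf'_eq_inf'_comp ht (· + a) fun p q => (hdist p q a).symm

-- The summand `a` carries the infima already expanded through the induction.
theorem InfDistrib.le_nsmul_inf'_add (hdist : InfDistrib S) {t : Finset ι} (ht : t.Nonempty)
    (u : ι → S) {x : S} {N : ℕ} {a : S}
    (h : ∀ s : Multiset ι, s.card = N → (∀ i ∈ s, i ∈ t) → x ≤ (s.map u).sum + a) :
    x ≤ N • t.inf' ht u + a := by
  induction N generalizing a with
  | zero => simpa using h 0 (by simp) (by simp)
  | succ N ih =>
    rw [succ_nsmul, add_assoc]
    refine ih fun s hcard hs => ?_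
    rw [add_left_comm, hdist.inf'_add]
    refine Finset.le_inf' _ _ fun i hi => ?_
    have hcons := h (i ::ₘ s) (by simp [hcard]) (Multiset.forall_mem_cons.2 ⟨hi, hs⟩)
    simpa only [Multiset.map_cons, Multiset.sum_cons, add_assoc] using hcons

variable [IsOrderedAddMonoid S] [IsBotZeroClass S]

theorem InfDistrib.add_inf_le (hdist : InfDistrib S) (a b x : S) :
    (a + b) ⊓ x ≤ a ⊓ x + b ⊓ x := by
  rw [← hdist a x, add_comm a (b ⊓ x), add_comm x (b ⊓ x), ← hdist b x a, ← hdist b x x]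
  refine le_inf (le_inf ?_ ?_) (le_inf ?_ ?_)
  · exact inf_le_left.trans_eq (add_comm a b)
  · exact inf_le_right.trans (le_add_of_nonneg_right zero_le)
  · exact inf_le_right.trans (le_add_of_nonneg_left zero_le)
  · exact inf_le_right.trans (le_add_of_nonneg_right zero_le)

theorem InfDistrib.nsmul_inf_le (hdist : InfDistrib S) (N : ℕ) (a x : S) :
    (N • a) ⊓ x ≤ N • (a ⊓ x) := by
  induction N with
  | zero => simp only [zero_nsmul, inf_le_left]
  | succ N ih =>
    simp only [succ_nsmul]
    exact (hdist.add_inf_le _ _ _).trans (by gcongr)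

end InfDistrib

section Pigeonhole

theorem exists_lt_count_of_mul_lt_card {ι : Type*} [Fintype ι] [DecidableEq ι] {s : Multiset ι}
    {k : ℕ} (h : Fintype.card ι * k < s.card) : ∃ j, k < s.count j := by
  have hsum : ∑ _j : ι, k < ∑ j, s.count j := by
    rw [Multiset.sum_count_eq_card fun j _ => Finset.mem_univ j]
    simpa using h
  obtain ⟨j, -, hj⟩ := Finset.exists_lt_of_sum_lt hsum
  exact ⟨j, hj⟩

variable {S : Type*} [AddCommMonoid S] [PartialOrder S] [IsOrderedAddMonoid S] [IsBotZeroClass S]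

theorem add_sum_map_nsmul_le_card_nsmul {ι : Type*} [Fintype ι] {x : S} {y : ι → S} {k : ℕ}
    (hky : ∀ j, (k + 1) • y j ≤ x) {s : Multiset ι} (hs : Fintype.card ι * k < s.card) :
    x + (s.map fun j => k • y j).sum ≤ s.card • x := by
  classical
  obtain ⟨j, hj⟩ := exists_lt_count_of_mul_lt_card hs
  obtain ⟨t, rfl⟩ := Multiset.le_iff_exists_add.1 (Multiset.le_count_iff_replicate_le.1 hj)
  have hrepeated : (k + 1) • k • y j ≤ k • x :=
    (smul_comm (k + 1) k (y j)).trans_le (nsmul_le_nsmul_right (hky j) k)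
  have hrest : (t.map fun i => k • y i).sum ≤ t.card • x := by
    simpa using Multiset.sum_le_card_nsmul (t.map fun i => k • y i) x
      (Multiset.forall_mem_map_iff.2 fun i _ =>
        (nsmul_le_nsmul_left zero_le k.le_succ).trans (hky i))
  calc x + ((Multiset.replicate (k + 1) j + t).map fun i => k • y i).sum
      = x + ((k + 1) • k • y j + (t.map fun i => k • y i).sum) := by
        rw [Multiset.map_add, Multiset.sum_add, Multiset.map_replicate, Multiset.sum_replicate]
    _ ≤ x + (k • x + t.card • x) := by gcongr
    _ = (Multiset.replicate (k + 1) j + t).card • x := by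
        rw [Multiset.card_add, Multiset.card_replicate, add_nsmul, succ_nsmul]
        abel

end Pigeonhole

section Complement

variable {S : Type*} [AddCommMonoid S]

theorem O5.exists_almost_complement [PartialOrder S] [CuSemigroup S] (h5 : O5 S)
    (hwc : WeakCancel S) {x z' z : S} (hz : z' ≪ z) (hzx : z ≤ x) :
    ∃ w, z' + w ≤ x ∧ ∀ a' a, a' ≪ a → a + z ≤ x → a' ≪ w := by
  obtain ⟨z'', hz', hz''⟩ := hz.exists_between
  obtain ⟨w, hwx, hxw⟩ := h5 z' z'' x hz' (hz''.le.trans hzx)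
  refine ⟨w, hwx, fun a' a ha hax => hwc a' w z'' ?_⟩
  exact (CuSemigroup.O3 ha hz'').trans_le ((hax.trans hxw).trans_eq (add_comm z'' w))

theorem WeakCancel.wayBelow_sum_map [PartialOrder S] [CuSemigroup S] (hwc : WeakCancel S)
    {ι : Type*} [Fintype ι] {x' x : S} {y' y u : ι → S} {k : ℕ} (hx : x' ≪ x)
    (hy : ∀ j, y' j ≪ y j) (hky : ∀ j, (k + 1) • y j ≤ x) (hu : ∀ j, x ≤ k • y' j + u j)
    {s : Multiset ι} (hs : Fintype.card ι * k < s.card) : x' ≪ (s.map u).sum := by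
  refine hwc _ _ (s.map fun j => k • y' j).sum ?_
  have hway : x' + (s.map fun j => k • y' j).sum ≪ x + (s.map fun j => k • y j).sum :=
    CuSemigroup.O3 hx (wayBelow_multiset_sum_map s fun j => (hy j).nsmul k)
  refine hway.trans_le ?_
  calc x + (s.map fun j => k • y j).sum
      ≤ s.card • x := add_sum_map_nsmul_le_card_nsmul hky hs
    _ = (s.map fun _ => x).sum := by simp
    _ ≤ (s.map fun j => u j + k • y' j).sum :=
        Multiset.sum_map_le_sum_map _ _ fun j _ => (hu j).trans_eq (add_comm _ _)
    _ = (s.map u).sum + (s.map fun j => k • y' j).sum := Multiset.sum_map_add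

variable [SemilatticeInf S] [CuSemigroup S]

theorem exists_nsmul_add_le_and_le_nsmul (hdist : InfDistrib S) (h5 : O5 S) (hwc : WeakCancel S)
    {ι : Type*} [Fintype ι] [Nonempty ι] {x' x : S} {y' y : ι → S} {k : ℕ} (hx : x' ≪ x)
    (hy : ∀ j, y' j ≪ y j) (hky : ∀ j, (k + 1) • y j ≤ x) :
    ∃ z, (∀ j, k • y' j + z ≤ x) ∧ x' ≤ (Fintype.card ι * k + 1) • z := by
  choose v hy'v hvy using fun j => (hy j).exists_between
  have hvx (j : ι) : k • v j ≤ x :=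
    calc k • v j ≤ k • y j := nsmul_le_nsmul_right (hvy j).le k
      _ ≤ (k + 1) • y j := nsmul_le_nsmul_left zero_le k.le_succ
      _ ≤ x := hky j
  choose u hux hxu using fun j => h5 _ _ x ((hy'v j).nsmul k) (hvx j)
  refine ⟨Finset.univ.inf' Finset.univ_nonempty u, fun j => ?_, ?_⟩
  · exact (add_le_add_right (Finset.inf'_le u (Finset.mem_univ j)) _).trans (hux j)
  · rw [← add_zero (_ • _)]
    refine hdist.le_nsmul_inf'_add _ u fun s hcard _ => ?_
    rw [add_zero]
    exact (hwc.wayBelow_sum_map hx hvy hky hxu (by omega)).le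

theorem InfDistrib.exists_wayBelow_le_nsmul (hdist : InfDistrib S) {x a w : S} {N : ℕ}
    (hx : x ≪ a) (ha : a ≤ N • w) : ∃ w', w' ≪ w ∧ w' ≪ a ∧ x ≤ N • w' := by
  have hinf : a ≤ N • (w ⊓ a) := (le_inf ha le_rfl).trans (hdist.nsmul_inf_le N w a)
  obtain ⟨w', hw', hxw'⟩ := (hx.trans_le hinf).exists_wayBelow_nsmul
  exact ⟨w', hw'.trans_le inf_le_left, hw'.trans_le inf_le_right, hxw'.le⟩

theorem exists_summand_and_remainder (hdist : InfDistrib S) (h5 : O5 S) (hwc : WeakCancel S)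
    {ι : Type*} [Fintype ι] [Nonempty ι] {x' x : S} {y : ι → S} {k : ℕ} (hk : k ≠ 0)
    (hxx : x' ≪ x) (hxy : x' ≪ ∑ j, y j) (hky : ∀ j, (k + 1) • y j ≤ x) :
    ∃ (z w' w : S) (y' : ι → S), z + w ≤ x ∧ x' ≤ (Fintype.card ι * k + 1) • z ∧
      x' ≤ Fintype.card ι • w' ∧ w' ≪ w ∧ w' ≪ ∑ j, y' j ∧ ∀ j, k • y' j ≤ w := by
  obtain ⟨v, hvy, hxv⟩ := hxy.exists_wayBelow_sum
  obtain ⟨y', hy'v, hxy'⟩ := hxv.exists_wayBelow_sum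
  obtain ⟨x'', hx', hx''⟩ := hxx.exists_between
  obtain ⟨z, hzx, hxz⟩ := exists_nsmul_add_le_and_le_nsmul hdist h5 hwc hx'' hvy hky
  obtain ⟨z', hz', hxz'⟩ := (hx'.trans_le hxz).exists_wayBelow_nsmul
  have hzx_self : z ≤ x :=
    (le_add_of_nonneg_left zero_le).trans (hzx (Classical.arbitrary ι))
  obtain ⟨w, hzw, hw⟩ := h5.exists_almost_complement hwc hz' hzx_self
  have hy'w (j : ι) : k • y' j ≤ w := (hw _ _ ((hy'v j).nsmul k) (hzx j)).le
  have hsum : ∑ j, y' j ≤ Fintype.card ι • w :=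
    Finset.sum_le_card_nsmul _ _ _ fun j _ => (le_self_nsmul zero_le hk).trans (hy'w j)
  obtain ⟨w', hw'w, hw'y', hxw'⟩ := hdist.exists_wayBelow_le_nsmul hxy' hsum
  exact ⟨z', w', w, y', hzw, hxz'.le, hxw', hw'w, hw'y', hy'w⟩

end Complement

section SummandBound

/-- The constant `M` of the theorem, for `n` elements `y_j` and `k` summands `z_j`. The truncated
subtractions are exact, since `1 ≤ r ≤ k`; for `k = 0` the supremum is `0`. -/
def summandBound (n k : ℕ) : ℕ :=
  (Finset.Icc 1 k).sup fun r => n ^ r * (k - r) + n ^ (r - 1)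

theorem le_summandBound (n : ℕ) {k r : ℕ} (hr : 1 ≤ r) (hrk : r ≤ k) :
    n ^ r * (k - r) + n ^ (r - 1) ≤ summandBound n k :=
  Finset.le_sup (f := fun r => n ^ r * (k - r) + n ^ (r - 1)) (Finset.mem_Icc.2 ⟨hr, hrk⟩)

theorem mul_add_one_le_summandBound_succ (n k : ℕ) : n * k + 1 ≤ summandBound n (k + 1) :=
  calc n * k + 1 = n ^ 1 * (k + 1 - 1) + n ^ (1 - 1) := by
        rw [pow_one, Nat.add_sub_cancel, Nat.sub_self, pow_zero]
    _ ≤ summandBound n (k + 1) := le_summandBound n le_rfl k.succ_pos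

theorem mul_summandBound_le_summandBound_succ (n k : ℕ) :
    n * summandBound n k ≤ summandBound n (k + 1) := by
  rw [summandBound, Finset.mul_sup₀]
  refine Finset.sup_le fun r hr => ?_
  obtain ⟨hr_pos, hrk⟩ := Finset.mem_Icc.1 hr
  calc n * (n ^ r * (k - r) + n ^ (r - 1))
      = n ^ (r + 1) * (k + 1 - (r + 1)) + n ^ (r + 1 - 1) := by
        rw [Nat.add_sub_add_right, Nat.add_sub_cancel, mul_add, ← mul_assoc, ← pow_succ',
          mul_pow_sub_one (by omega)]
    _ ≤ summandBound n (k + 1) := le_summandBound n r.succ_pos (Nat.succ_le_succ hrk)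

end SummandBound

/-- Lemma on extracting `k` comparable summands: in an inf-semilattice ordered
Cu-semigroup with (O5) and weak cancellation, if `x' ≪ x`, `x' ≪ Σ_j y j` and
`k·y j ≤ x` for each `j`, then there are `z 1, …, z k` with `Σ z j ≤ x` and
`x' ≤ M·z j` for all `j`, where `M = max {n^r(k−r) + n^(r−1) : r = 1,…,k}`. -/
theorem exists_summands_of_weaklyDivisible {S : Type*} [AddCommMonoid S]
    [SemilatticeInf S] [CuSemigroup S] (hdist : InfDistrib S)
    (h5 : O5 S) (hwc : WeakCancel S)
    (k n : ℕ) (hk : 1 ≤ k) (hn : 1 ≤ n) (x' x : S) (y : Fin n → S)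
    (hxx : WayBelow x' x) (hxy : WayBelow x' (∑ j, y j))
    (hky : ∀ j, k • y j ≤ x) :
    ∃ z : Fin k → S, (∑ j, z j) ≤ x ∧
      ∀ j, x' ≤ ((Finset.Icc 1 k).sup fun r => n ^ r * (k - r) + n ^ (r - 1)) • z j := by
  induction k, hk using Nat.le_induction generalizing x' x y with
  | base => exact ⟨fun _ => x', by simpa using hxx.le, by simp⟩
  | succ k hk ih =>
    have : Nonempty (Fin n) := ⟨⟨0, hn⟩⟩
    obtain ⟨z, w', w, y', hzw, hxz, hxw', hw'w, hw'y', hy'w⟩ :=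
      exists_summand_and_remainder hdist h5 hwc (by omega) hxx hxy hky
    rw [Fintype.card_fin] at hxz hxw'
    obtain ⟨v, hvw, hw'v⟩ := ih w' w y' hw'w hw'y' hy'w
    refine ⟨Fin.cons z v, ?_, Fin.cases ?_ fun i => ?_⟩
    · rw [Fin.sum_cons]
      exact (add_le_add_right hvw z).trans hzw
    · exact hxz.trans (nsmul_le_nsmul_left zero_le (mul_add_one_le_summandBound_succ n k))
    · calc x' ≤ n • w' := hxw'
        _ ≤ n • summandBound n k • v i := nsmul_le_nsmul_right (hw'v i) n
        _ = (n * summandBound n k) • v i := smul_smul _ _ _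
        _ ≤ summandBound n (k + 1) • v i :=
            nsmul_le_nsmul_left zero_le (mul_summandBound_le_summandBound_succ n k)
end

section
/- Let S be a Cu-semigroup and let (x_j)_{j≥1} be a sequence in S such that x_j ∝ x_{j+1} for every j. Then the element x = Σ_{j=1}^∞ x_j, defined as the supremum of the increasing sequence of partial sums (Σ_{j=1}^m x_j)_m, is soft. -/
/-!
A partial sum `a` of the `x j` is dominated by a multiple `k • b` of the next term `b`, because `∝`
is transitive and additive on the left. Hence `(k + 1) • a = k • a + a ≤ k • (a + b) ≤ k • s`, and
every element way below `s` lies below such an `a`.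
-/

/-- The relation `x ∝ y`: some multiple of `y` dominates `x`. The multiple `0 • y` is allowed. -/
def Propto {S : Type*} [AddMonoid S] [LE S] (x y : S) : Prop :=
  ∃ n : ℕ, x ≤ n • y

section OrderedMonoid

variable {S : Type*} [AddCommMonoid S]

namespace Propto

variable [Preorder S] {a b c : S}

theorem refl (a : S) : Propto a a :=
  ⟨1, (one_nsmul a).ge⟩

theorem zero_left (a : S) : Propto 0 a :=
  ⟨0, (zero_nsmul a).ge⟩

variable [IsOrderedAddMonoid S]

theorem trans (hab : Propto a b) (hbc : Propto b c) : Propto a c := by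
  obtain ⟨m, hm⟩ := hab
  obtain ⟨n, hn⟩ := hbc
  refine ⟨n * m, ?_⟩
  calc
    a ≤ m • b := hm
    _ ≤ m • n • c := nsmul_le_nsmul_right hn m
    _ = (n * m) • c := (mul_nsmul c n m).symm

theorem add_left (hac : Propto a c) (hbc : Propto b c) : Propto (a + b) c := by
  obtain ⟨m, hm⟩ := hac
  obtain ⟨n, hn⟩ := hbc
  exact ⟨m + n, (add_le_add hm hn).trans_eq (add_nsmul c m n).symm⟩

theorem sum_range {x : ℕ → S} (hx : ∀ j, Propto (x j) (x (j + 1))) (m : ℕ) :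
    Propto (∑ j ∈ Finset.range m, x j) (x m) := by
  induction m with
  | zero => exact zero_left (x 0)
  | succ m ih =>
    rw [Finset.sum_range_succ]
    exact (ih.add_left (refl (x m))).trans (hx m)

theorem exists_succ_nsmul_le (hab : Propto a b) (hc : a + b ≤ c) :
    ∃ k : ℕ, (k + 1) • a ≤ k • c := by
  obtain ⟨k, hk⟩ := hab
  refine ⟨k, ?_⟩
  calc
    (k + 1) • a = k • a + a := succ_nsmul a k
    _ ≤ k • a + k • b := by gcongr
    _ = k • (a + b) := (nsmul_add a b k).symm
    _ ≤ k • c := nsmul_le_nsmul_right hc k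

end Propto

variable [PartialOrder S] [IsOrderedAddMonoid S]

theorem soft_of_isLUB_of_forall_exists_succ_nsmul_le {f : ℕ → S} {s : S} (hf : Monotone f)
    (hs : IsLUB (Set.range f) s) (h : ∀ m, ∃ k : ℕ, (k + 1) • f m ≤ k • s) : Soft s := by
  intro x' hx'
  obtain ⟨m, hm⟩ := hx' f hf s hs le_rfl
  obtain ⟨k, hk⟩ := h m
  exact ⟨k, (nsmul_le_nsmul_right hm (k + 1)).trans hk⟩

theorem soft_of_sum_propto_general {x : ℕ → S} (hx : ∀ j, 0 ≤ x j)
    (hprop : ∀ j, Propto (x j) (x (j + 1))) {s : S}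
    (hs : IsLUB (Set.range fun m => ∑ j ∈ Finset.range m, x j) s) : Soft s := by
  have partialSums_mono : Monotone fun m => ∑ j ∈ Finset.range m, x j :=
    (Finset.sum_mono_set_of_nonneg hx).comp Finset.range_mono
  refine soft_of_isLUB_of_forall_exists_succ_nsmul_le partialSums_mono hs fun m => ?_
  have sum_add_next_le : ∑ j ∈ Finset.range m, x j + x m ≤ s :=
    (Finset.sum_range_succ x m).ge.trans (hs.1 ⟨m + 1, rfl⟩)
  exact (Propto.sum_range hprop m).exists_succ_nsmul_le sum_add_next_le

end OrderedMonoid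

instance CuSemigroup.toIsOrderedAddMonoid {S : Type*} [AddCommMonoid S] [PartialOrder S]
    [CuSemigroup S] : IsOrderedAddMonoid S where
  add_le_add_left _ _ h _ := CuSemigroup.add_le_add h le_rfl

/-- If `(x j)` is a sequence in a Cu-semigroup with `x j ∝ x (j+1)` for every `j`, then
the supremum of the partial sums `Σ_{j<m} x j` is a soft element. -/
theorem soft_of_sum_propto {S : Type*} [AddCommMonoid S] [PartialOrder S] [CuSemigroup S]
    (x : ℕ → S) (hprop : ∀ j, ∃ n : ℕ, x j ≤ n • x (j + 1))
    (s : S) (hs : IsLUB (Set.range fun m => ∑ j ∈ Finset.range m, x j) s) :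
    Soft s :=
  soft_of_sum_propto_general (fun j => CuSemigroup.zero_le (x j)) hprop hs
end

section
/- Let S be a Cu-semigroup satisfying (O5) and weak cancellation, let y ∈ S be full and (3,ω)-divisible, and let c_1, c_2 ∈ S satisfy c_1 ≪ ∞·y and c_2 ≪ ∞·y (note that ∞·y is the largest element of S since y is full). Then there exist z, w ∈ S such that w is full, 2z + w ≤ y, c_1 ∝ z, c_2 ∝ z, and z ≪ ∞·y. -/
/-!
Put `c = c₁ + c₂` and `k = 2`. By divisibility there is `e` with `(k + 1) e ≤ y` and `c ≪ n e` for
some `n`, hence `c ≤ n z` for some `z ≪ e`. Interpolate `z ≪ x ≪ e` and apply (O5) to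
`k z ≪ k x ≤ y`: this gives `w` with `k z + w ≤ y ≤ k x + w`. Now `x + k x ≪ (k + 1) e ≤ w + k x`,
so weak cancellation yields `x ≤ w`, whence `y ≤ (k + 1) w`. Since also `w ≤ y`, `∞ w = ∞ y`.
-/

section OrderedMonoid

variable {S : Type*} [AddCommMonoid S] [Preorder S] [IsOrderedAddMonoid S] {x y s : S}

theorem upperBounds_range_nsmul_subset {m : ℕ} (h : x ≤ m • y) :
    upperBounds (Set.range fun n : ℕ => n • y) ⊆ upperBounds (Set.range fun n : ℕ => n • x) := by
  rintro b hb _ ⟨n, rfl⟩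
  calc n • x ≤ n • m • y := nsmul_le_nsmul_right h n
    _ = (m * n) • y := (mul_nsmul y m n).symm
    _ ≤ b := hb ⟨m * n, rfl⟩

theorem isLUB_range_nsmul_of_le_nsmul {m m' : ℕ} (hs : IsLUB (Set.range fun n : ℕ => n • y) s)
    (hxy : x ≤ m • y) (hyx : y ≤ m' • x) : IsLUB (Set.range fun n : ℕ => n • x) s := by
  rwa [IsLUB, (upperBounds_range_nsmul_subset hyx).antisymm (upperBounds_range_nsmul_subset hxy)]

end OrderedMonoid

namespace WayBelow

variable {S : Type*} [PartialOrder S] {x y z : S}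

theorem le_s15 (h : WayBelow x y) : x ≤ y := by
  obtain ⟨_, hxy⟩ := h (fun _ => y) monotone_const y (by simp) le_rfl
  exact hxy

theorem trans_le_s15 (hxy : WayBelow x y) (hyz : y ≤ z) : WayBelow x z :=
  fun f hf s hs hzs => hxy f hf s hs (hyz.trans hzs)

theorem of_le_of_wayBelow (hxy : x ≤ y) (hyz : WayBelow y z) : WayBelow x z :=
  fun f hf s hs hzs => (hyz f hf s hs hzs).imp fun _ => hxy.trans

end WayBelow

/-- `(m, ω)`-divisibility: every `x' ≪ x` is dominated by a multiple of some `y` with `m y ≤ x`.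
It makes room in `x` for `m - 1` copies of a large element and a full complement. -/
def IsOmegaDivisible {S : Type*} [AddCommMonoid S] [PartialOrder S] (m : ℕ) (x : S) : Prop :=
  ∀ x' : S, WayBelow x' x → ∃ (y : S) (n : ℕ), m • y ≤ x ∧ x' ≤ n • y

namespace CuSemigroup

variable {S : Type*} [AddCommMonoid S] [PartialOrder S] [CuSemigroup S]

instance toIsOrderedAddMonoid_s15 : IsOrderedAddMonoid S where
  add_le_add_left _ _ h _ := CuSemigroup.add_le_add h le_rfl

variable {c e s x y z : S}

theorem monotone_nsmul_left (x : S) : Monotone fun n : ℕ => n • x :=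
  fun _ _ h => nsmul_le_nsmul_left (zero_le x) h

theorem wayBelow_nsmul (h : WayBelow x y) (n : ℕ) : WayBelow (n • x) (n • y) := by
  induction n with
  | zero => exact fun f _ _ _ _ => ⟨0, by simpa using zero_le (f 0)⟩
  | succ n ih => simpa only [succ_nsmul] using O3 ih h

theorem isLUB_range_const_nsmul {f : ℕ → S} (hf : Monotone f) (hx : IsLUB (Set.range f) x) (n : ℕ) :
    IsLUB (Set.range fun i => n • f i) (n • x) := by
  induction n with
  | zero => simp
  | succ n ih =>
    simp only [succ_nsmul]
    exact O4 _ _ (fun _ _ h => nsmul_le_nsmul_right (hf h) n) hf _ _ ih hx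

theorem exists_monotone_wayBelow_isLUB (x : S) : ∃ f : ℕ → S, Monotone f ∧
    (∀ n, WayBelow (f n) (f (n + 1))) ∧ (∀ n, WayBelow (f n) x) ∧ IsLUB (Set.range f) x := by
  obtain ⟨f, hf, hfx⟩ := O2 x
  exact ⟨f, monotone_nat_of_le_succ fun n => (hf n).le_s15, hf,
    fun n => (hf n).trans_le_s15 (hfx.1 ⟨n + 1, rfl⟩), hfx⟩

theorem exists_wayBelow_wayBelow (h : WayBelow x y) : ∃ z, WayBelow x z ∧ WayBelow z y := by
  obtain ⟨f, hmono, hf, hfy, hlub⟩ := exists_monotone_wayBelow_isLUB y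
  obtain ⟨n, hn⟩ := h f hmono y hlub le_rfl
  exact ⟨f (n + 1), .of_le_of_wayBelow hn (hf n), hfy (n + 1)⟩

theorem exists_wayBelow_wayBelow_nsmul {n : ℕ} (h : WayBelow c (n • y)) :
    ∃ y', WayBelow y' y ∧ WayBelow c (n • y') := by
  obtain ⟨d, hcd, hdy⟩ := exists_wayBelow_wayBelow h
  obtain ⟨f, hmono, -, hfy, hlub⟩ := exists_monotone_wayBelow_isLUB y
  obtain ⟨i, hi⟩ := hdy _ (fun _ _ h => nsmul_le_nsmul_right (hmono h) n) _
    (isLUB_range_const_nsmul hmono hlub n) le_rfl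
  exact ⟨f i, hfy i, hcd.trans_le_s15 hi⟩

theorem exists_wayBelow_nsmul (hs : IsLUB (Set.range fun n : ℕ => n • y) s) (hc : WayBelow c s) :
    ∃ n : ℕ, WayBelow c (n • y) := by
  obtain ⟨d, hcd, hds⟩ := exists_wayBelow_wayBelow hc
  obtain ⟨n, hn⟩ := hds _ (monotone_nsmul_left y) s hs le_rfl
  exact ⟨n, hcd.trans_le_s15 hn⟩

theorem exists_wayBelow_le_nsmul_of_isOmegaDivisible {m : ℕ} (hy : IsOmegaDivisible m y)
    (hs : IsLUB (Set.range fun n : ℕ => n • y) s) (hc : WayBelow c s) :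
    ∃ e z : S, m • e ≤ y ∧ WayBelow z e ∧ ∃ n : ℕ, c ≤ n • z := by
  obtain ⟨n, hcy⟩ := exists_wayBelow_nsmul hs hc
  obtain ⟨y', hy', hcy'⟩ := exists_wayBelow_wayBelow_nsmul hcy
  obtain ⟨e, p, hey, hy'e⟩ := hy y' hy'
  have hce : WayBelow c ((p * n) • e) :=
    hcy'.trans_le_s15 ((nsmul_le_nsmul_right hy'e n).trans_eq (mul_nsmul e p n).symm)
  obtain ⟨z, hze, hcz⟩ := exists_wayBelow_wayBelow_nsmul hce
  exact ⟨e, z, hey, hze, p * n, hcz.le_s15⟩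

theorem exists_nsmul_add_le_and_le_nsmul (h5 : O5 S) (hwc : WeakCancel S) {k : ℕ}
    (hze : WayBelow z e) (hey : (k + 1) • e ≤ y) :
    ∃ w : S, k • z + w ≤ y ∧ y ≤ (k + 1) • w := by
  obtain ⟨x, hzx, hxe⟩ := exists_wayBelow_wayBelow hze
  have hxy : k • x ≤ y :=
    calc k • x ≤ k • e := nsmul_le_nsmul_right hxe.le_s15 k
      _ ≤ (k + 1) • e := monotone_nsmul_left e k.le_succ
      _ ≤ y := hey
  obtain ⟨w, hzw, hyw⟩ := h5 (k • z) (k • x) y (wayBelow_nsmul hzx k) hxy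
  have hxw : WayBelow x w := hwc x w (k • x) <| by
    rw [← succ_nsmul', add_comm w]
    exact (wayBelow_nsmul hxe (k + 1)).trans_le_s15 (hey.trans hyw)
  refine ⟨w, hzw, ?_⟩
  calc y ≤ k • x + w := hyw
    _ ≤ k • w + w := add_le_add (nsmul_le_nsmul_right hxw.le_s15 k) le_rfl
    _ = (k + 1) • w := (succ_nsmul w k).symm

end CuSemigroup

theorem exists_small_full_complement_general {S : Type*} [AddCommMonoid S] [PartialOrder S]
    [CuSemigroup S] (h5 : O5 S) (hwc : WeakCancel S) {k : ℕ} {y iy c : S}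
    (hiy : IsLUB (Set.range fun n : ℕ => n • y) iy) (hdiv : IsOmegaDivisible (k + 1) y)
    (hc : WayBelow c iy) :
    ∃ z w : S, IsLUB (Set.range fun n : ℕ => n • w) iy ∧ k • z + w ≤ y ∧
      (∃ n : ℕ, c ≤ n • z) ∧ WayBelow z iy := by
  obtain ⟨e, z, hey, hze, hcz⟩ :=
    CuSemigroup.exists_wayBelow_le_nsmul_of_isOmegaDivisible hdiv hiy hc
  obtain ⟨w, hzw, hyw⟩ := CuSemigroup.exists_nsmul_add_le_and_le_nsmul h5 hwc hze hey
  have hwy : w ≤ 1 • y :=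
    calc w ≤ k • z + w := le_add_of_nonneg_left (nsmul_nonneg (CuSemigroup.zero_le z) k)
      _ ≤ y := hzw
      _ = 1 • y := (one_nsmul y).symm
  have hei : e ≤ iy :=
    calc e = 1 • e := (one_nsmul e).symm
      _ ≤ (k + 1) • e := CuSemigroup.monotone_nsmul_left e (Nat.le_add_left 1 k)
      _ ≤ y := hey
      _ = 1 • y := (one_nsmul y).symm
      _ ≤ iy := hiy.1 ⟨1, rfl⟩
  exact ⟨z, w, isLUB_range_nsmul_of_le_nsmul hiy hwy hyw, hzw, hcz, hze.trans_le_s15 hei⟩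

/-- In a Cu-semigroup with (O5) and weak cancellation, if `y` is full and
`(3,ω)`-divisible and `c₁, c₂ ≪ ∞·y`, then there are `z, w` with `w` full,
`2z + w ≤ y`, `c₁ ∝ z`, `c₂ ∝ z` and `z ≪ ∞·y`. -/
theorem exists_small_full_complement {S : Type*} [AddCommMonoid S] [PartialOrder S]
    [CuSemigroup S] (h5 : O5 S) (hwc : WeakCancel S)
    (y : S) (iy : S) (hiy : IsLUB (Set.range fun n : ℕ => n • y) iy)
    (hfull : ∀ t : S, t ≤ iy)
    (hdiv : ∀ y' : S, WayBelow y' y → ∃ (z : S) (n : ℕ), 3 • z ≤ y ∧ y' ≤ n • z)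
    (c₁ c₂ : S) (hc₁ : WayBelow c₁ iy) (hc₂ : WayBelow c₂ iy) :
    ∃ z w : S, IsFull w ∧ 2 • z + w ≤ y ∧
      (∃ n : ℕ, c₁ ≤ n • z) ∧ (∃ n : ℕ, c₂ ≤ n • z) ∧ WayBelow z iy := by
  obtain ⟨z, w, hw, hzw, ⟨n, hn⟩, hz⟩ := exists_small_full_complement_general h5 hwc hiy hdiv
    ((CuSemigroup.O3 hc₁ hc₂).trans_le_s15 (hfull (iy + iy)))
  exact ⟨z, w, ⟨iy, hw, hfull⟩, hzw,
    ⟨n, (le_add_of_nonneg_right (CuSemigroup.zero_le c₂)).trans hn⟩,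
    ⟨n, (le_add_of_nonneg_left (CuSemigroup.zero_le c₁)).trans hn⟩, hz⟩
end

section
/- Let S be an inf-semilattice ordered Cu-semigroup, let x, y ∈ S, and let n ∈ ℕ. Then for every functional λ on S one has λ(n·(x ∧ y)) = λ((n·x) ∧ (n·y)). (That is, the elements n·(x ∧ y) and (n·x) ∧ (n·y) have the same rank, i.e., the same image under every functional.) -/
/-!
Expanding `k • (x ⊓ y)` by distributivity shows that it is the infimum of the elements
`i • x + j • y` with `i + j = k`. If `k = n + m` with `n ≤ m + 1`, then in every such
decomposition `n ≤ i` or `n ≤ j`, so each of these elements dominates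
`n • x ⊓ n • y + m • (x ⊓ y)`. Thus `n • (x ⊓ y)` and `n • x ⊓ n • y` become equal after adding
`n • (x ⊓ y)`, a summand which cancels wherever a functional is finite on it.
-/

namespace InfDistrib

variable {S : Type*} [AddCommMonoid S] [SemilatticeInf S]

theorem le_nsmul_inf_add (hdist : InfDistrib S) {x y w : S} (k : ℕ) (c : S)
    (h : ∀ i j : ℕ, i + j = k → w ≤ i • x + j • y + c) : w ≤ k • (x ⊓ y) + c := by
  induction k generalizing c with
  | zero => simpa using h 0 0 rfl
  | succ k ih =>
    have hx : w ≤ k • (x ⊓ y) + (x + c) := ih (x + c) fun i j hij =>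
      (h (i + 1) j (by lia)).trans_eq (by rw [succ_nsmul]; abel)
    have hy : w ≤ k • (x ⊓ y) + (y + c) := ih (y + c) fun i j hij =>
      (h i (j + 1) (by lia)).trans_eq (by rw [succ_nsmul]; abel)
    calc w ≤ (x + (k • (x ⊓ y) + c)) ⊓ (y + (k • (x ⊓ y) + c)) :=
          le_inf (hx.trans_eq (add_left_comm ..)) (hy.trans_eq (add_left_comm ..))
      _ = x ⊓ y + (k • (x ⊓ y) + c) := hdist ..
      _ = (k + 1) • (x ⊓ y) + c := by rw [succ_nsmul', add_assoc]

theorem le_nsmul_inf_iff (hdist : InfDistrib S) {x y w : S} {k : ℕ} :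
    w ≤ k • (x ⊓ y) ↔ ∀ i j : ℕ, i + j = k → w ≤ i • x + j • y := by
  have := hdist.isOrderedAddMonoid
  refine ⟨?_, fun h => by simpa using hdist.le_nsmul_inf_add k 0 (by simpa using h)⟩
  rintro hw i j rfl
  calc w ≤ (i + j) • (x ⊓ y) := hw
    _ = i • (x ⊓ y) + j • (x ⊓ y) := add_nsmul ..
    _ ≤ i • x + j • y := by gcongr <;> simp

theorem nsmul_inf_le_s17 (hdist : InfDistrib S) (x y : S) (n : ℕ) :
    n • (x ⊓ y) ≤ n • x ⊓ n • y :=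
  have := hdist.isOrderedAddMonoid
  (nsmul_right_mono n).map_inf_le x y

theorem inf_nsmul_add_nsmul_inf (hdist : InfDistrib S) (x y : S) {n m : ℕ} (hnm : n ≤ m + 1) :
    n • x ⊓ n • y + m • (x ⊓ y) = (n + m) • (x ⊓ y) := by
  have := hdist.isOrderedAddMonoid
  have hm : ∀ i j : ℕ, i + j = m → m • (x ⊓ y) ≤ i • x + j • y := hdist.le_nsmul_inf_iff.1 le_rfl
  apply le_antisymm
  · refine hdist.le_nsmul_inf_iff.2 fun i j hij => ?_
    obtain hi | hj : n ≤ i ∨ n ≤ j := by lia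
    · obtain ⟨p, rfl⟩ := Nat.exists_eq_add_of_le hi
      calc n • x ⊓ n • y + m • (x ⊓ y) ≤ n • x + (p • x + j • y) :=
            add_le_add inf_le_left (hm p j (by lia))
        _ = (n + p) • x + j • y := by rw [add_nsmul, add_assoc]
    · obtain ⟨q, rfl⟩ := Nat.exists_eq_add_of_le hj
      calc n • x ⊓ n • y + m • (x ⊓ y) ≤ n • y + (i • x + q • y) :=
            add_le_add inf_le_right (hm i q (by lia))
        _ = i • x + (n + q) • y := by rw [add_nsmul, add_left_comm]
  · rw [add_nsmul]
    gcongr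
    exact hdist.nsmul_inf_le_s17 x y n

end InfDistrib

theorem functional_nsmul_inf_general {S : Type*} [AddCommMonoid S] [SemilatticeInf S]
    (hdist : InfDistrib S) (x y : S) (n : ℕ) {lam : S → ENNReal}
    (hadd : ∀ a b : S, lam (a + b) = lam a + lam b) (hmono : Monotone lam) :
    lam (n • (x ⊓ y)) = lam (n • x ⊓ n • y) := by
  have hle : lam (n • (x ⊓ y)) ≤ lam (n • x ⊓ n • y) := hmono (hdist.nsmul_inf_le_s17 x y n)
  by_cases htop : lam (n • (x ⊓ y)) = ⊤
  · rw [htop, top_le_iff] at hle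
    rw [htop, hle]
  · rw [← ENNReal.add_left_inj htop, ← hadd, ← hadd, ← add_nsmul,
      hdist.inf_nsmul_add_nsmul_inf x y n.le_succ]

/-- In an inf-semilattice ordered Cu-semigroup, `n·(x ⊓ y)` and `(n·x) ⊓ (n·y)` agree
under every functional, i.e. they have the same rank. -/
theorem functional_nsmul_inf {S : Type*} [AddCommMonoid S] [SemilatticeInf S]
    [CuSemigroup S] (hdist : InfDistrib S)
    (x y : S) (n : ℕ) (lam : S → ENNReal) (hlam : IsFunctional lam) :
    lam (n • (x ⊓ y)) = lam ((n • x) ⊓ (n • y)) :=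
  functional_nsmul_inf_general hdist x y n hlam.2.1 hlam.2.2.1
end
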